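/- arXiv:1606.09131 — 3 statements merged into one kernel-verified Lean document; each statement's English description precedes it below -/
import Mathlib

section
/- Positive-solution transfer to the transposed system: Let D be an n×n real diagonal matrix with strictly positive diagonal entries and let A be an n×n real matrix with nonnegative entries. Suppose there exists a vector p ∈ ℝⁿ with all entries strictly positive such that the vector (I − D·A) p has all entries strictly positive. Then for every vector c ∈ ℝⁿ with all entries strictly positive, the matrix I − D·Aᵀ is invertible and the vector p' = (I − D·Aᵀ)⁻¹ c has all entries strictly positive. -/
open Matrix

/-!
If `B ≥ 0`, `p ≥ 0` and `B p < p`, then `p > 0`, and comparing a vector `x` with `p` at an index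
where `x i / p i` is minimal shows that `B x ≤ x` forces `x ≥ 0`. Hence `1 - B` is invertible with
an entrywise nonnegative inverse, so `x = (1 - Bᵀ)⁻¹ 1` is nonnegative and satisfies `Bᵀ x < x`.
Similarly `1 + A (1 - D A)⁻¹ D`, the inverse of `1 - A D`, is nonnegative when `1 - D A` has a
nonnegative inverse. For symmetric `D` we have `D Aᵀ = (A D)ᵀ`, so the property passes from `D A`
to `A D` and then to `D Aᵀ`.
-/

section Nonneg

variable {l m n R : Type*} [Fintype m] [Semiring R] [PartialOrder R] [IsOrderedRing R]

theorem matrix_mulVec_nonneg {A : Matrix l m R} {v : m → R} (hA : ∀ i j, 0 ≤ A i j) (hv : 0 ≤ v) :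
    0 ≤ A *ᵥ v :=
  fun i => dotProduct_nonneg_of_nonneg (hA i) hv

theorem matrix_mulVec_le_mulVec {A : Matrix l m R} {v w : m → R} (hA : ∀ i j, 0 ≤ A i j)
    (hvw : v ≤ w) : A *ᵥ v ≤ A *ᵥ w :=
  fun i => dotProduct_le_dotProduct_of_nonneg_left hvw (hA i)

theorem matrix_mul_nonneg {A : Matrix l m R} {B : Matrix m n R} (hA : ∀ i j, 0 ≤ A i j)
    (hB : ∀ i j, 0 ≤ B i j) (i : l) (j : n) : 0 ≤ (A * B) i j :=
  dotProduct_nonneg_of_nonneg (hA i) fun k => hB k j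

end Nonneg

section Productive

variable {m n K : Type*} [Fintype m] [Fintype n] [Field K] [LinearOrder K]

/-- Productive matrices in the sense of Leontief's input-output model: entrywise nonnegative
matrices `B` for which some nonnegative production vector `p` exceeds its own consumption `B p` in
every coordinate. For `B ≥ 0` this says that `1 - B` is a nonsingular M-matrix. -/
structure IsProductive (B : Matrix n n K) : Prop where
  nonneg : ∀ i j, 0 ≤ B i j
  exists_mulVec_lt : ∃ p : n → K, 0 ≤ p ∧ ∀ i, (B *ᵥ p) i < p i

namespace IsProductive

variable [IsStrictOrderedRing K] {B : Matrix n n K}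

theorem exists_pos_mulVec_lt (hB : IsProductive B) :
    ∃ p : n → K, (∀ i, 0 < p i) ∧ ∀ i, (B *ᵥ p) i < p i := by
  obtain ⟨p, hp, hBp⟩ := hB.exists_mulVec_lt
  exact ⟨p, fun i => (matrix_mulVec_nonneg hB.nonneg hp i).trans_lt (hBp i), hBp⟩

theorem nonneg_of_mulVec_le (hB : IsProductive B) {x : n → K} (hx : B *ᵥ x ≤ x) : 0 ≤ x := by
  obtain ⟨p, hp, hBp⟩ := hB.exists_pos_mulVec_lt
  intro j
  have : Nonempty n := ⟨j⟩
  obtain ⟨i, hi⟩ := Finite.exists_min fun k => x k / p k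
  set t := x i / p i
  have htp : t • p ≤ x := fun k => (le_div_iff₀ (hp k)).mp (hi k)
  suffices ht : 0 ≤ t from (mul_nonneg ht (hp j).le).trans (htp j)
  by_contra! ht
  have : x i < x i := calc
    x i = t * p i := (div_mul_cancel₀ _ (hp i).ne').symm
    _ < t * (B *ᵥ p) i := mul_lt_mul_of_neg_left (hBp i) ht
    _ = (B *ᵥ (t • p)) i := by rw [mulVec_smul, Pi.smul_apply, smul_eq_mul]
    _ ≤ (B *ᵥ x) i := matrix_mulVec_le_mulVec hB.nonneg htp i
    _ ≤ x i := hx i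
  exact this.false

section Inverse

variable [DecidableEq n]

theorem isUnit_one_sub (hB : IsProductive B) : IsUnit (1 - B) := by
  rw [← mulVec_injective_iff_isUnit]
  refine (injective_iff_map_eq_zero (1 - B).mulVecLin).mpr fun x hx => ?_
  have hBx : B *ᵥ x = x := by
    simpa [sub_mulVec, sub_eq_zero, eq_comm] using hx
  refine le_antisymm (neg_nonneg.mp (hB.nonneg_of_mulVec_le ?_)) (hB.nonneg_of_mulVec_le hBx.le)
  rw [mulVec_neg, hBx]

theorem inv_mulVec_eq_add (hB : IsProductive B) (c : n → K) :
    (1 - B)⁻¹ *ᵥ c = c + B *ᵥ ((1 - B)⁻¹ *ᵥ c) := by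
  have hdet : IsUnit (1 - B).det := (isUnit_iff_isUnit_det _).mp hB.isUnit_one_sub
  rw [← sub_eq_iff_eq_add]
  nth_rw 1 [← one_mulVec ((1 - B)⁻¹ *ᵥ c)]
  rw [← sub_mulVec, mulVec_mulVec, mul_nonsing_inv _ hdet, one_mulVec]

theorem inv_mulVec_nonneg (hB : IsProductive B) {c : n → K} (hc : 0 ≤ c) :
    0 ≤ (1 - B)⁻¹ *ᵥ c := by
  refine hB.nonneg_of_mulVec_le ?_
  nth_rw 2 [hB.inv_mulVec_eq_add c]
  exact le_add_of_nonneg_left hc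

theorem inv_mulVec_pos (hB : IsProductive B) {c : n → K} (hc : ∀ i, 0 < c i) (i : n) :
    0 < ((1 - B)⁻¹ *ᵥ c) i := by
  rw [hB.inv_mulVec_eq_add c]
  exact add_pos_of_pos_of_nonneg (hc i)
    (matrix_mulVec_nonneg hB.nonneg (hB.inv_mulVec_nonneg fun j => (hc j).le) i)

theorem inv_nonneg (hB : IsProductive B) (i j : n) : 0 ≤ (1 - B)⁻¹ i j := by
  have hcol := hB.inv_mulVec_nonneg (c := Pi.single j 1) (Pi.single_nonneg.mpr zero_le_one) i
  rwa [mulVec_single_one] at hcol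

end Inverse

protected theorem transpose (hB : IsProductive B) : IsProductive Bᵀ := by
  classical
  have hdet : IsUnit (1 - B).det := (isUnit_iff_isUnit_det _).mp hB.isUnit_one_sub
  set x : n → K := (1 - B)⁻¹ᵀ *ᵥ 1
  have hx : x - Bᵀ *ᵥ x = 1 := calc
    x - Bᵀ *ᵥ x = (1 - B)ᵀ *ᵥ x := by rw [transpose_sub, transpose_one, sub_mulVec, one_mulVec]
    _ = 1 := by
      rw [mulVec_mulVec, ← transpose_mul, nonsing_inv_mul _ hdet, transpose_one, one_mulVec]
  refine ⟨fun i j => hB.nonneg j i, x,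
    matrix_mulVec_nonneg (fun i j => hB.inv_nonneg j i) zero_le_one, fun i => ?_⟩
  rw [← sub_pos, ← Pi.sub_apply, hx]
  exact one_pos

protected theorem mul_comm {D : Matrix m n K} {A : Matrix n m K} (hD : ∀ i j, 0 ≤ D i j)
    (hA : ∀ i j, 0 ≤ A i j) (hDA : IsProductive (D * A)) : IsProductive (A * D) := by
  classical
  set y : m → K := (1 - D * A)⁻¹ *ᵥ (D *ᵥ 1)
  have hy : 0 ≤ y := hDA.inv_mulVec_nonneg (matrix_mulVec_nonneg hD zero_le_one)
  have hADy : (A * D) *ᵥ (1 + A *ᵥ y) = A *ᵥ y := calc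
    (A * D) *ᵥ (1 + A *ᵥ y) = A *ᵥ (D *ᵥ 1 + (D * A) *ᵥ y) := by
      rw [← mulVec_mulVec, mulVec_add, mulVec_mulVec]
    _ = A *ᵥ y := by rw [← hDA.inv_mulVec_eq_add]
  refine ⟨matrix_mul_nonneg hA hD, 1 + A *ᵥ y,
    add_nonneg zero_le_one (matrix_mulVec_nonneg hA hy), fun i => ?_⟩
  rw [hADy]
  exact lt_add_of_pos_left _ one_pos

end IsProductive

theorem positive_solution_transfer_general [IsStrictOrderedRing K] [DecidableEq n]
    {D A : Matrix n n K} (hD : D.IsSymm) (hD_nonneg : ∀ i j, 0 ≤ D i j) (hA : ∀ i j, 0 ≤ A i j)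
    {p : n → K} (hp : 0 ≤ p) (hIp : ∀ i, 0 < ((1 - D * A) *ᵥ p) i)
    {c : n → K} (hc : ∀ i, 0 < c i) :
    IsUnit (1 - D * Aᵀ) ∧ ∀ i, 0 < ((1 - D * Aᵀ)⁻¹ *ᵥ c) i := by
  have hDA : IsProductive (D * A) :=
    ⟨matrix_mul_nonneg hD_nonneg hA, p, hp, by simpa [sub_mulVec] using hIp⟩
  have hDAt : IsProductive (D * Aᵀ) := by
    simpa only [transpose_mul, hD.eq] using (hDA.mul_comm hD_nonneg hA).transpose
  exact ⟨hDAt.isUnit_one_sub, hDAt.inv_mulVec_pos hc⟩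

end Productive

/-- **Positive-solution transfer to the transposed system.** Let `D` be a real diagonal
matrix with strictly positive diagonal entries and `A` a nonnegative real matrix.
If some entrywise-positive vector `p` satisfies that `(I − D·A) p` is entrywise
positive, then for every entrywise-positive vector `c`, the matrix `I − D·Aᵀ` is
invertible and `(I − D·Aᵀ)⁻¹ c` is entrywise positive. -/
theorem positive_solution_transfer (n : ℕ) (D A : Matrix (Fin n) (Fin n) ℝ)
    (hD : D.IsDiag) (hDpos : ∀ i, 0 < D i i) (hA : ∀ i j, 0 ≤ A i j)
    (p : Fin n → ℝ) (hp : ∀ i, 0 < p i) (hIp : ∀ i, 0 < ((1 - D * A) *ᵥ p) i) :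
    ∀ c : Fin n → ℝ, (∀ i, 0 < c i) →
      IsUnit (1 - D * Aᵀ) ∧ ∀ i, 0 < ((1 - D * Aᵀ)⁻¹ *ᵥ c) i := by
  have hD_nonneg (i j : Fin n) : 0 ≤ D i j := by
    obtain rfl | hij := eq_or_ne i j
    · exact (hDpos i).le
    · exact (hD hij).ge
  exact fun c hc => positive_solution_transfer_general hD.isSymm hD_nonneg hA
    (fun i => (hp i).le) hIp hc
end

section
/- Monotonicity of the uplink interference function: Under the C-RAN setup with h_k ≠ 0 and target rate R_k > 0 for each user k, if p, p' ∈ ℝ^K are nonnegative power vectors with p_i ≥ p'_i for every i, then Γ_k(p) ≥ Γ_k(p') for every k. -/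
open Finset Matrix ComplexOrder

noncomputable section

namespace CRAN

variable {M K : ℕ}

/-- The channel vector `h_k = (h_{1,k}, …, h_{M,k}) ∈ ℂ^M` of user `k`. -/
def chanVec (h : Fin M → Fin K → ℂ) (k : Fin K) : Fin M → ℂ := fun m => h m k

/-- Quantization noise diagonal matrix `Q(p) = Diag(q_1(p),…,q_M(p))` with
`q_m(p) = (Σ_i p_i |h_{m,i}|² + σ²)/η_m` and `η_m = 2^{C_m} − 1`. -/
def Qmat (h : Fin M → Fin K → ℂ) (σ2 : ℝ) (C : Fin M → ℝ) (p : Fin K → ℝ) :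
    Matrix (Fin M) (Fin M) ℂ :=
  Matrix.diagonal fun m =>
    (((∑ i, p i * ‖h m i‖ ^ 2 + σ2) / ((2 : ℝ) ^ (C m) - 1) : ℝ) : ℂ)

/-- Interference-plus-quantization-plus-noise covariance matrix
`Σ_{j≠k} p_j h_j h_jᴴ + Q(p) + σ² I` for user `k`. -/
def covMat (h : Fin M → Fin K → ℂ) (σ2 : ℝ) (C : Fin M → ℝ) (p : Fin K → ℝ)
    (k : Fin K) : Matrix (Fin M) (Fin M) ℂ :=
  (∑ j ∈ univ.erase k, (p j : ℂ) • Matrix.vecMulVec (chanVec h j) (star (chanVec h j)))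
    + Qmat h σ2 C p + (σ2 : ℂ) • 1

/-- The uplink interference function
`Γ_k(p) = (2^{R_k} − 1) / (h_kᴴ (Σ_{j≠k} p_j h_j h_jᴴ + Q(p) + σ²I)⁻¹ h_k)`,
where the (real, positive) denominator is taken as the real part of the quadratic
form. -/
def Gam (h : Fin M → Fin K → ℂ) (σ2 : ℝ) (C : Fin M → ℝ) (R : Fin K → ℝ)
    (p : Fin K → ℝ) (k : Fin K) : ℝ :=
  ((2 : ℝ) ^ (R k) - 1) /
    (star (chanVec h k) ⬝ᵥ ((covMat h σ2 C p k)⁻¹ *ᵥ chanVec h k)).re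

/-!
The covariance matrix is affine in the powers with positive semidefinite coefficients, so raising
the powers raises it in the Loewner order. On positive definite matrices inversion reverses
this order, so the denominator of `Γ_k` can only decrease, while staying positive.
-/

section LoewnerOrder

open scoped MatrixOrder

variable {𝕜 n : Type*} [RCLike 𝕜]

theorem diagonal_le_diagonal [DecidableEq n] {d e : n → 𝕜} (hde : d ≤ e) :
    diagonal d ≤ diagonal e := by
  rw [Matrix.le_iff, diagonal_sub]
  exact PosSemidef.diagonal (sub_nonneg.2 hde)

variable [Fintype n]

theorem star_dotProduct_mulVec_le {A B : Matrix n n 𝕜} (hAB : A ≤ B) (x : n → 𝕜) :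
    star x ⬝ᵥ (A *ᵥ x) ≤ star x ⬝ᵥ (B *ᵥ x) := by
  simpa only [sub_mulVec, dotProduct_sub, sub_nonneg] using
    (Matrix.le_iff.1 hAB).dotProduct_mulVec_nonneg x

-- The operator norm makes complex matrices a C⋆-algebra, where inversion is known to be antitone.
open scoped Matrix.Norms.L2Operator in
theorem inv_le_inv_of_posDef [DecidableEq n] {A B : Matrix n n ℂ} (hA : A.PosDef) (hAB : A ≤ B) :
    B⁻¹ ≤ A⁻¹ := by
  simpa only [nonsing_inv_eq_ringInverse] using
    CStarAlgebra.ringInverse_le_ringInverse hAB hA.isStrictlyPositive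

end LoewnerOrder

theorem two_rpow_sub_one_pos {c : ℝ} (hc : 0 < c) : 0 < (2 : ℝ) ^ c - 1 :=
  sub_pos.2 (Real.one_lt_rpow one_lt_two hc)

section Covariance

open scoped MatrixOrder

variable (h : Fin M → Fin K → ℂ) {σ2 : ℝ} {C : Fin M → ℝ} {p p' : Fin K → ℝ}

theorem Qmat_posSemidef (hσ : 0 ≤ σ2) (hC : ∀ m, 0 < C m) (hp : ∀ i, 0 ≤ p i) :
    (Qmat h σ2 C p).PosSemidef := by
  refine PosSemidef.diagonal fun m => Complex.zero_le_real.2 (div_nonneg ?_ ?_)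
  · exact add_nonneg (sum_nonneg fun i _ => mul_nonneg (hp i) (sq_nonneg _)) hσ
  · exact (two_rpow_sub_one_pos (hC m)).le

theorem Qmat_mono (hC : ∀ m, 0 < C m) (hpp' : ∀ i, p' i ≤ p i) :
    Qmat h σ2 C p' ≤ Qmat h σ2 C p := by
  refine diagonal_le_diagonal fun m => Complex.real_le_real.2 ?_
  have hη : 0 < (2 : ℝ) ^ C m - 1 := two_rpow_sub_one_pos (hC m)
  gcongr with i
  exact hpp' i

theorem covMat_posDef (hσ : 0 < σ2) (hC : ∀ m, 0 < C m) (hp : ∀ i, 0 ≤ p i) (k : Fin K) :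
    (covMat h σ2 C p k).PosDef := by
  have interference_posSemidef : (∑ j ∈ univ.erase k,
      (p j : ℂ) • vecMulVec (chanVec h j) (star (chanVec h j))).PosSemidef :=
    posSemidef_sum _ fun j _ =>
      (posSemidef_vecMulVec_self_star _).smul (Complex.zero_le_real.2 (hp j))
  have noise_posDef : ((σ2 : ℂ) • (1 : Matrix (Fin M) (Fin M) ℂ)).PosDef :=
    PosDef.one.smul (Complex.zero_lt_real.2 hσ)
  exact noise_posDef.posSemidef_add (interference_posSemidef.add (Qmat_posSemidef h hσ.le hC hp))

theorem covMat_mono (hC : ∀ m, 0 < C m) (hpp' : ∀ i, p' i ≤ p i) (k : Fin K) :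
    covMat h σ2 C p' k ≤ covMat h σ2 C p k := by
  unfold covMat
  gcongr with j
  · exact (posSemidef_vecMulVec_self_star _).nonneg
  · exact Complex.real_le_real.2 (hpp' j)
  · exact Qmat_mono h hC hpp'

end Covariance

/-- **Monotonicity of the uplink interference function.** Under the C-RAN setup with
`h_k ≠ 0` and target rates `R_k > 0`, if `p ≥ p'` entrywise (both nonnegative), then
`Γ_k(p) ≥ Γ_k(p')` for every `k`. -/
theorem gamma_monotone (M K : ℕ) (h : Fin M → Fin K → ℂ) (σ2 : ℝ) (hσ : 0 < σ2)
    (C : Fin M → ℝ) (hC : ∀ m, 0 < C m) (R : Fin K → ℝ) (hR : ∀ k, 0 < R k)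
    (hh : ∀ k, chanVec h k ≠ 0)
    (p p' : Fin K → ℝ) (hp : ∀ i, 0 ≤ p i) (hp' : ∀ i, 0 ≤ p' i) (hpp' : ∀ i, p' i ≤ p i) :
    ∀ k, Gam h σ2 C R p' k ≤ Gam h σ2 C R p k := by
  intro k
  have hpos : 0 < (star (chanVec h k) ⬝ᵥ ((covMat h σ2 C p k)⁻¹ *ᵥ chanVec h k)).re :=
    (Complex.lt_def.1 ((covMat_posDef h hσ hC hp k).inv.dotProduct_mulVec_pos (hh k))).1
  have hle : (star (chanVec h k) ⬝ᵥ ((covMat h σ2 C p k)⁻¹ *ᵥ chanVec h k)).re ≤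
      (star (chanVec h k) ⬝ᵥ ((covMat h σ2 C p' k)⁻¹ *ᵥ chanVec h k)).re :=
    Complex.re_le_re <| star_dotProduct_mulVec_le
      (inv_le_inv_of_posDef (covMat_posDef h hσ hC hp' k) (covMat_mono h hC hpp' k)) _
  exact div_le_div_of_nonneg_left (two_rpow_sub_one_pos (hR k)).le hpos hle

end CRAN
end
end

section
/- Equality of optimal sum powers in uplink and downlink power minimization: For any channel coefficients h_{m,k} ∈ ℂ, noise power σ² > 0, fronthaul capacities C_m > 0 and target rates R_k > 0, the infimum of the uplink sum power Σ_k p^ul_k over all uplink solutions (powers p^ul_k ≥ 0, unit-norm receive beamformers w_k, quantization noise levels q^ul_m > 0) satisfying R^ul_k ≥ R_k for all k and C^ul_m ≤ C_m for all m, equals the infimum of the downlink sum power Σ_k p^dl_k + Σ_m q^dl_m over all downlink solutions (powers p^dl_k ≥ 0, unit-norm transmit beamformers v_k, quantization noise levels q^dl_m > 0) satisfying R^dl_k ≥ R_k for all k and C^dl_m ≤ C_m for all m. (If one feasible set is empty, so is the other.) -/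
open Finset

noncomputable section

namespace CRAN

variable {M K : ℕ}

/-- Uplink fronthaul rate
`C^ul_m = log₂((Σ_i p_i |h_{m,i}|² + q_m + σ²)/q_m)`. -/
def ulFronthaul (h : Fin M → Fin K → ℂ) (σ2 : ℝ) (p : Fin K → ℝ) (q : Fin M → ℝ)
    (m : Fin M) : ℝ :=
  Real.logb 2 ((∑ i, p i * ‖h m i‖ ^ 2 + q m + σ2) / q m)

/-- Uplink user rate `R^ul_k`. -/
def ulRate (h : Fin M → Fin K → ℂ) (σ2 : ℝ) (p : Fin K → ℝ) (w : Fin K → Fin M → ℂ)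
    (q : Fin M → ℝ) (k : Fin K) : ℝ :=
  Real.logb 2
    ((∑ i, p i * ‖∑ m, starRingEnd ℂ (w k m) * h m i‖ ^ 2
        + ∑ m, q m * ‖w k m‖ ^ 2 + σ2) /
     (∑ j ∈ univ.erase k, p j * ‖∑ m, starRingEnd ℂ (w k m) * h m j‖ ^ 2
        + ∑ m, q m * ‖w k m‖ ^ 2 + σ2))

/-- Downlink fronthaul rate
`C^dl_m = log₂((Σ_i p_i |v_{i,m}|² + q_m)/q_m)`. -/
def dlFronthaul (p : Fin K → ℝ) (v : Fin K → Fin M → ℂ) (q : Fin M → ℝ)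
    (m : Fin M) : ℝ :=
  Real.logb 2 ((∑ i, p i * ‖v i m‖ ^ 2 + q m) / q m)

/-- Downlink user rate `R^dl_k`. -/
def dlRate (h : Fin M → Fin K → ℂ) (σ2 : ℝ) (p : Fin K → ℝ) (v : Fin K → Fin M → ℂ)
    (q : Fin M → ℝ) (k : Fin K) : ℝ :=
  Real.logb 2
    ((∑ i, p i * ‖∑ m, starRingEnd ℂ (v i m) * h m k‖ ^ 2
        + ∑ m, q m * ‖h m k‖ ^ 2 + σ2) /
     (∑ j ∈ univ.erase k, p j * ‖∑ m, starRingEnd ℂ (v j m) * h m k‖ ^ 2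
        + ∑ m, q m * ‖h m k‖ ^ 2 + σ2))


/-- The set of achievable uplink sum powers for target rates `R` under fronthaul
capacities `C`. -/
def ulFeasPowers (h : Fin M → Fin K → ℂ) (σ2 : ℝ) (C : Fin M → ℝ) (R : Fin K → ℝ) :
    Set ℝ :=
  {P | ∃ (p : Fin K → ℝ) (w : Fin K → Fin M → ℂ) (q : Fin M → ℝ),
    (∀ k, 0 ≤ p k) ∧ (∀ k, ∑ m, ‖w k m‖ ^ 2 = 1) ∧ (∀ m, 0 < q m) ∧
    (∀ k, R k ≤ ulRate h σ2 p w q k) ∧ (∀ m, ulFronthaul h σ2 p q m ≤ C m) ∧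
    P = ∑ k, p k}

/-- The set of achievable downlink sum powers for target rates `R` under fronthaul
capacities `C`. -/
def dlFeasPowers (h : Fin M → Fin K → ℂ) (σ2 : ℝ) (C : Fin M → ℝ) (R : Fin K → ℝ) :
    Set ℝ :=
  {P | ∃ (p : Fin K → ℝ) (v : Fin K → Fin M → ℂ) (q : Fin M → ℝ),
    (∀ k, 0 ≤ p k) ∧ (∀ k, ∑ m, ‖v k m‖ ^ 2 = 1) ∧ (∀ m, 0 < q m) ∧
    (∀ k, R k ≤ dlRate h σ2 p v q k) ∧ (∀ m, dlFronthaul p v q m ≤ C m) ∧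
    P = ∑ k, p k + ∑ m, q m}

/-!
For fixed beamformers the fronthaul constraints bound the quantization noise levels below by
affine functions of the powers, and lowering the levels to these bounds only helps the rates and
the sum power. Eliminating the levels leaves, with the same matrix `A` and vector `β > 0` for both
links,

* uplink: minimise `∑ p_k` subject to `p ≥ 0`, `A p ≥ σ² β`;
* downlink: minimise `β ⬝ p` subject to `p ≥ 0`, `Aᵀ p ≥ σ² 1`.

`A` is a Z-matrix, so a feasible point of either program makes `A` invertible with `A⁻¹ ≥ 0`. Both
minima are then attained where the constraints are tight, at the common value `σ² (1 ⬝ A⁻¹ β)`.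

In the downlink an eliminated level may be zero whereas the problem asks for positive ones, so
downlink powers are only reached in the closure of the feasible set, which has the same infimum.
-/

section MatrixVector

open Matrix

variable {n R : Type*} [Fintype n]

lemma mulVec_nonneg [Semiring R] [PartialOrder R] [IsOrderedRing R] {m : Type*}
    {A : Matrix m n R} (hA : ∀ i j, 0 ≤ A i j) {x : n → R} (hx : 0 ≤ x) : 0 ≤ A *ᵥ x :=
  fun i => dotProduct_nonneg_of_nonneg (hA i) hx

lemma mulVec_le_mulVec [Semiring R] [PartialOrder R] [IsOrderedRing R] {m : Type*}
    {A : Matrix m n R} (hA : ∀ i j, 0 ≤ A i j) {x y : n → R} (hxy : x ≤ y) :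
    A *ᵥ x ≤ A *ᵥ y :=
  fun i => dotProduct_le_dotProduct_of_nonneg_left hxy (hA i)

lemma diagonal_mulVec_eq_mul [DecidableEq n] [NonUnitalNonAssocSemiring R] (d x : n → R) :
    diagonal d *ᵥ x = d * x :=
  funext fun i => mulVec_diagonal d x i

/-- A Z-matrix: a matrix whose off-diagonal entries are nonpositive. -/
def IsZMatrix {n R : Type*} [Zero R] [LE R] (A : Matrix n n R) : Prop :=
  ∀ ⦃i j⦄, i ≠ j → A i j ≤ 0

namespace IsZMatrix

lemma transpose {n R : Type*} [Zero R] [LE R] {A : Matrix n n R} (hA : IsZMatrix A) :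
    IsZMatrix Aᵀ :=
  fun _ _ hij => hA hij.symm

lemma mulVec_apply_nonpos [Ring R] [PartialOrder R] [IsOrderedRing R] {A : Matrix n n R}
    (hA : IsZMatrix A) {x : n → R} (hx : 0 ≤ x) {i : n} (hxi : x i = 0) : (A *ᵥ x) i ≤ 0 := by
  refine sum_nonpos fun j _ => ?_
  obtain rfl | hij := eq_or_ne i j
  · rw [hxi, mul_zero]
  · exact mul_nonpos_of_nonpos_of_nonneg (hA hij) (hx j)

lemma pos_of_mulVec_pos [Ring R] [PartialOrder R] [IsOrderedRing R] {A : Matrix n n R}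
    (hA : IsZMatrix A) {x : n → R} (hx : 0 ≤ x) (hAx : ∀ i, 0 < (A *ᵥ x) i) (i : n) : 0 < x i :=
  (hx i).lt_of_ne' fun hxi => (hA.mulVec_apply_nonpos hx hxi).not_gt (hAx i)

section Semipositive

variable [Field R] [LinearOrder R] [IsStrictOrderedRing R] {A : Matrix n n R} {x : n → R}

lemma nonneg_of_mulVec_nonneg (hA : IsZMatrix A) (hx : 0 ≤ x) (hAx : ∀ i, 0 < (A *ᵥ x) i)
    {z : n → R} (hz : 0 ≤ A *ᵥ z) : 0 ≤ z := by
  intro j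
  have hx_pos := hA.pos_of_mulVec_pos hx hAx
  obtain ⟨i, -, hi⟩ := exists_min_image univ (fun i => z i / x i) ⟨j, mem_univ j⟩
  set t := z i / x i
  -- `z - t • x` is nonnegative and vanishes at `i`, so row `i` of `A` forces `0 ≤ t`.
  have hzx : 0 ≤ z - t • x := fun k => sub_nonneg.mpr <|
    (le_div_iff₀ (hx_pos k)).mp (hi k (mem_univ k))
  have hzx_i : (z - t • x) i = 0 := sub_eq_zero.mpr (div_mul_cancel₀ _ (hx_pos i).ne').symm
  have hrow : (A *ᵥ z) i ≤ t * (A *ᵥ x) i := by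
    simpa [mulVec_sub, mulVec_smul] using hA.mulVec_apply_nonpos hzx hzx_i
  have ht : 0 ≤ t := nonneg_of_mul_nonneg_left ((hz i).trans hrow) (hAx i)
  exact (mul_nonneg ht (hx j)).trans (sub_nonneg.mp (hzx j))

lemma isUnit_of_mulVec_pos [DecidableEq n] (hA : IsZMatrix A) (hx : 0 ≤ x)
    (hAx : ∀ i, 0 < (A *ᵥ x) i) : IsUnit A := by
  have hle : ∀ u v : n → R, A *ᵥ u = A *ᵥ v → u ≤ v := fun u v huv => sub_nonneg.mp <|
    hA.nonneg_of_mulVec_nonneg hx hAx (by rw [mulVec_sub, huv, sub_self])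
  exact mulVec_injective_iff_isUnit.mp fun u v huv => (hle u v huv).antisymm (hle v u huv.symm)

lemma inv_apply_nonneg [DecidableEq n] (hA : IsZMatrix A) (hx : 0 ≤ x)
    (hAx : ∀ i, 0 < (A *ᵥ x) i) (i j : n) : 0 ≤ A⁻¹ i j := by
  have hdet := (isUnit_iff_isUnit_det A).mp (hA.isUnit_of_mulVec_pos hx hAx)
  have hcol : A *ᵥ (A⁻¹ *ᵥ Pi.single j 1) = Pi.single j 1 := by
    rw [mulVec_mulVec, mul_nonsing_inv A hdet, one_mulVec]
  have hnonneg : 0 ≤ A⁻¹ *ᵥ Pi.single j 1 := hA.nonneg_of_mulVec_nonneg hx hAx <| by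
    rw [hcol]
    exact Pi.single_nonneg.mpr zero_le_one
  simpa using hnonneg i

lemma exists_transpose_mulVec_eq (hA : IsZMatrix A) (hx : 0 ≤ x) {b c : n → R}
    (hb : ∀ i, 0 < b i) (hAx : b ≤ A *ᵥ x) (hc : 0 ≤ c) :
    ∃ y, 0 ≤ y ∧ Aᵀ *ᵥ y = c ∧ b ⬝ᵥ y ≤ c ⬝ᵥ x := by
  classical
  have hAx_pos : ∀ i, 0 < (A *ᵥ x) i := fun i => (hb i).trans_le (hAx i)
  have hdet := (isUnit_iff_isUnit_det A).mp (hA.isUnit_of_mulVec_pos hx hAx_pos)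
  have hy : 0 ≤ A⁻¹ᵀ *ᵥ c :=
    mulVec_nonneg (fun i j => hA.inv_apply_nonneg hx hAx_pos j i) hc
  have hAy : Aᵀ *ᵥ (A⁻¹ᵀ *ᵥ c) = c := by
    rw [mulVec_mulVec, ← transpose_mul, nonsing_inv_mul A hdet, transpose_one, one_mulVec]
  refine ⟨A⁻¹ᵀ *ᵥ c, hy, hAy, ?_⟩
  calc b ⬝ᵥ (A⁻¹ᵀ *ᵥ c)
      ≤ (A *ᵥ x) ⬝ᵥ (A⁻¹ᵀ *ᵥ c) := dotProduct_le_dotProduct_of_nonneg_right hAx hy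
    _ = x ⬝ᵥ (Aᵀ *ᵥ (A⁻¹ᵀ *ᵥ c)) := by rw [dotProduct_comm, ← dotProduct_transpose_mulVec]
    _ = c ⬝ᵥ x := by rw [hAy, dotProduct_comm]

end Semipositive

end IsZMatrix

end MatrixVector

section LowerBounds

lemma lowerBounds_eq_univ_iff {α : Type*} [Preorder α] [NoMaxOrder α] {s : Set α} :
    lowerBounds s = Set.univ ↔ s = ∅ := by
  refine ⟨fun hs => Set.eq_empty_of_forall_notMem fun a ha => ?_, fun hs => hs ▸ lowerBounds_empty⟩
  obtain ⟨b, hab⟩ := exists_gt a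
  have hb : b ∈ lowerBounds s := hs ▸ Set.mem_univ b
  exact (hb ha).not_gt hab

lemma csInf_eq_csInf_of_lowerBounds_eq {α : Type*} [ConditionallyCompleteLinearOrder α]
    [NoMaxOrder α] {s t : Set α} (hst : lowerBounds s = lowerBounds t) : sInf s = sInf t := by
  have hempty : s = ∅ ↔ t = ∅ := by rw [← lowerBounds_eq_univ_iff, hst, lowerBounds_eq_univ_iff]
  have hbdd : BddBelow s ↔ BddBelow t := by rw [BddBelow, hst, BddBelow]
  obtain rfl | hs := s.eq_empty_or_nonempty
  · rw [hempty.mp rfl]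
  have ht : t.Nonempty := Set.nonempty_iff_ne_empty.mpr (hempty.not.mp hs.ne_empty)
  by_cases hsb : BddBelow s
  · rw [← csSup_lowerBounds_eq_csInf hsb hs, hst, csSup_lowerBounds_eq_csInf (hbdd.mp hsb) ht]
  · rw [csInf_of_not_bddBelow hsb, csInf_of_not_bddBelow (hbdd.not.mp hsb)]

end LowerBounds

section LogRate

lemma le_logb_sum_div_sum_erase_iff {ι : Type*} [Fintype ι] [DecidableEq ι] {f : ι → ℝ}
    {k : ι} {b N r : ℝ} (hb : 1 < b) (hr : 0 < r) (hf : 0 ≤ f) (hN : 0 < N) :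
    r ≤ Real.logb b ((∑ i, f i + N) / (∑ j ∈ univ.erase k, f j + N)) ↔
      ∑ i, f i + N ≤ f k / (1 - b ^ (-r)) := by
  have hinterf : 0 < ∑ j ∈ univ.erase k, f j + N :=
    add_pos_of_nonneg_of_pos (sum_nonneg fun j _ => hf j) hN
  have htotal : 0 < ∑ i, f i + N := add_pos_of_nonneg_of_pos (sum_nonneg fun i _ => hf i) hN
  have hsub : b ^ (-r) < 1 := Real.rpow_lt_one_of_one_lt_of_neg hb (neg_lt_zero.mpr hr)
  rw [Real.le_logb_iff_rpow_le hb (div_pos htotal hinterf), le_div_iff₀ hinterf,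
    le_div_iff₀ (sub_pos.mpr hsub), ← le_inv_mul_iff₀ (Real.rpow_pos_of_pos (by linarith) r),
    ← Real.rpow_neg (by linarith), ← add_sum_erase univ f (mem_univ k)]
  constructor <;> intro hle <;> linarith

lemma logb_add_div_le_iff {b S q r : ℝ} (hb : 1 < b) (hr : 0 < r) (hq : 0 < q) (hS : 0 ≤ S) :
    Real.logb b ((S + q) / q) ≤ r ↔ (b ^ r - 1)⁻¹ * S ≤ q := by
  have hbr : 0 < b ^ r - 1 := sub_pos.mpr (Real.one_lt_rpow hb hr)
  rw [Real.logb_le_iff_le_rpow hb (by positivity), div_le_iff₀ hq, inv_mul_le_iff₀ hbr]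
  constructor <;> intro hle <;> linarith

end LogRate

section Coupling

open Matrix

/-- Entrywise power gains `|a_{ij}|²`, for the channels `h` and for the beamformers alike. -/
def powerGain {ι κ : Type*} (a : ι → κ → ℂ) : Matrix ι κ ℝ :=
  of fun i j => ‖a i j‖ ^ 2

/-- The gains `|w_kᴴ h_j|²` between the beamformer of user `k` and the channel of user `j`. -/
def beamGain (h : Fin M → Fin K → ℂ) (w : Fin K → Fin M → ℂ) : Matrix (Fin K) (Fin K) ℝ :=
  powerGain fun k j => ∑ m, starRingEnd ℂ (w k m) * h m j

/-- The least quantization noise level at an RRH of capacity `C_m`, per unit of power of the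
signal it has to quantize. -/
def quantCoeff (C : Fin M → ℝ) : Fin M → ℝ :=
  fun m => (2 ^ C m - 1)⁻¹

/-- The weight `|w_kᴴ h_k|² / (1 - 2^{-R_k})` of `p_k` in the form `total ≤ weight * p_k` of the
rate constraint, where `total` is the whole power received by user `k`, its own signal included. -/
def signalGain (h : Fin M → Fin K → ℂ) (R : Fin K → ℝ) (w : Fin K → Fin M → ℂ) : Fin K → ℝ :=
  fun k => beamGain h w k k / (1 - 2 ^ (-R k))

/-- The coupling matrix of the users once the quantization noise levels are the least that the
fronthaul constraints allow. The uplink uses the matrix itself, the downlink its transpose. -/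
def coupling (h : Fin M → Fin K → ℂ) (C : Fin M → ℝ) (R : Fin K → ℝ) (w : Fin K → Fin M → ℂ) :
    Matrix (Fin K) (Fin K) ℝ :=
  diagonal (signalGain h R w) -
    (beamGain h w + powerGain w * diagonal (quantCoeff C) * powerGain h)

/-- The factor by which least-level quantization amplifies the noise of user `k` in the uplink;
in the downlink it is the total power spent per unit of `p_k`. -/
def noiseGain (C : Fin M → ℝ) (w : Fin K → Fin M → ℂ) : Fin K → ℝ :=
  1 + powerGain w *ᵥ quantCoeff C

lemma powerGain_nonneg {ι κ : Type*} (a : ι → κ → ℂ) (i : ι) (j : κ) : 0 ≤ powerGain a i j :=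
  sq_nonneg ‖a i j‖

lemma quantCoeff_pos {C : Fin M → ℝ} (hC : ∀ m, 0 < C m) (m : Fin M) : 0 < quantCoeff C m :=
  inv_pos.mpr (sub_pos.mpr (Real.one_lt_rpow one_lt_two (hC m)))

lemma noiseGain_pos {C : Fin M → ℝ} (hC : ∀ m, 0 < C m) (w : Fin K → Fin M → ℂ) (k : Fin K) :
    0 < noiseGain C w k :=
  add_pos_of_pos_of_nonneg one_pos <|
    mulVec_nonneg (powerGain_nonneg w) (fun m => (quantCoeff_pos hC m).le) k

lemma isZMatrix_coupling (h : Fin M → Fin K → ℂ) {C : Fin M → ℝ} (hC : ∀ m, 0 < C m)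
    (R : Fin K → ℝ) (w : Fin K → Fin M → ℂ) : IsZMatrix (coupling h C R w) := by
  intro k j hkj
  have hquant : 0 ≤ (powerGain w * diagonal (quantCoeff C) * powerGain h) k j := by
    rw [mul_apply]
    refine sum_nonneg fun m _ => mul_nonneg ?_ (powerGain_nonneg h m j)
    rw [mul_diagonal]
    exact mul_nonneg (powerGain_nonneg w k m) (quantCoeff_pos hC m).le
  have hbeam : 0 ≤ beamGain h w k j := powerGain_nonneg _ k j
  rw [coupling, Matrix.sub_apply, Matrix.add_apply, diagonal_apply_ne _ hkj]
  linarith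

lemma coupling_mulVec (h : Fin M → Fin K → ℂ) (C : Fin M → ℝ) (R : Fin K → ℝ)
    (w : Fin K → Fin M → ℂ) (p : Fin K → ℝ) :
    coupling h C R w *ᵥ p = signalGain h R w * p -
      (beamGain h w *ᵥ p + powerGain w *ᵥ (quantCoeff C * (powerGain h *ᵥ p))) := by
  simp only [coupling, sub_mulVec, add_mulVec, ← mulVec_mulVec, diagonal_mulVec_eq_mul]

lemma coupling_transpose_mulVec (h : Fin M → Fin K → ℂ) (C : Fin M → ℝ) (R : Fin K → ℝ)
    (w : Fin K → Fin M → ℂ) (p : Fin K → ℝ) :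
    (coupling h C R w)ᵀ *ᵥ p = signalGain h R w * p -
      ((beamGain h w)ᵀ *ᵥ p + (powerGain h)ᵀ *ᵥ (quantCoeff C * ((powerGain w)ᵀ *ᵥ p))) := by
  simp only [coupling, transpose_sub, transpose_add, transpose_mul, diagonal_transpose,
    sub_mulVec, add_mulVec, ← mulVec_mulVec, diagonal_mulVec_eq_mul]

lemma noiseGain_dotProduct (C : Fin M → ℝ) (w : Fin K → Fin M → ℂ) (p : Fin K → ℝ) :
    noiseGain C w ⬝ᵥ p =
      ∑ k, p k + ∑ m, (quantCoeff C * ((powerGain w)ᵀ *ᵥ p)) m := by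
  rw [noiseGain, add_dotProduct, one_dotProduct, dotProduct_comm _ p,
    ← dotProduct_transpose_mulVec]
  rfl

end Coupling

section Feasibility

open Matrix Filter Topology

variable {h : Fin M → Fin K → ℂ} {σ2 : ℝ} {C : Fin M → ℝ} {R : Fin K → ℝ}
  {w : Fin K → Fin M → ℂ} {p : Fin K → ℝ} {q : Fin M → ℝ}

lemma forall_le_ulRate_iff (hσ : 0 < σ2) (hR : ∀ k, 0 < R k) (hp : 0 ≤ p) (hq : 0 ≤ q) :
    (∀ k, R k ≤ ulRate h σ2 p w q k) ↔
      beamGain h w *ᵥ p + powerGain w *ᵥ q + σ2 • 1 ≤ signalGain h R w * p := by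
  refine forall_congr' fun k => ?_
  have hnoise : 0 < ∑ m, q m * ‖w k m‖ ^ 2 + σ2 :=
    add_pos_of_nonneg_of_pos (sum_nonneg fun m _ => mul_nonneg (hq m) (sq_nonneg _)) hσ
  rw [ulRate, add_assoc, add_assoc, le_logb_sum_div_sum_erase_iff one_lt_two (hR k)
    (fun j => mul_nonneg (hp j) (sq_nonneg _)) hnoise]
  simp [mulVec, dotProduct, beamGain, powerGain, signalGain, mul_comm, mul_div_assoc, add_assoc]

lemma forall_le_dlRate_iff (hσ : 0 < σ2) (hR : ∀ k, 0 < R k) (hp : 0 ≤ p) (hq : 0 ≤ q) :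
    (∀ k, R k ≤ dlRate h σ2 p w q k) ↔
      (beamGain h w)ᵀ *ᵥ p + (powerGain h)ᵀ *ᵥ q + σ2 • 1 ≤ signalGain h R w * p := by
  refine forall_congr' fun k => ?_
  have hnoise : 0 < ∑ m, q m * ‖h m k‖ ^ 2 + σ2 :=
    add_pos_of_nonneg_of_pos (sum_nonneg fun m _ => mul_nonneg (hq m) (sq_nonneg _)) hσ
  rw [dlRate, add_assoc, add_assoc, le_logb_sum_div_sum_erase_iff one_lt_two (hR k)
    (fun j => mul_nonneg (hp j) (sq_nonneg _)) hnoise]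
  simp [mulVec, dotProduct, beamGain, powerGain, signalGain, mul_comm, mul_div_assoc, add_assoc]

lemma forall_ulFronthaul_le_iff (hσ : 0 ≤ σ2) (hC : ∀ m, 0 < C m) (hp : 0 ≤ p)
    (hq : ∀ m, 0 < q m) :
    (∀ m, ulFronthaul h σ2 p q m ≤ C m) ↔
      quantCoeff C * (powerGain h *ᵥ p + σ2 • 1) ≤ q := by
  refine forall_congr' fun m => ?_
  have hS : 0 ≤ ∑ i, p i * ‖h m i‖ ^ 2 + σ2 :=
    add_nonneg (sum_nonneg fun i _ => mul_nonneg (hp i) (sq_nonneg _)) hσ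
  rw [ulFronthaul, add_right_comm, logb_add_div_le_iff one_lt_two (hC m) (hq m) hS]
  simp [mulVec, dotProduct, powerGain, quantCoeff, mul_comm]

lemma forall_dlFronthaul_le_iff (hC : ∀ m, 0 < C m) (hp : 0 ≤ p) (hq : ∀ m, 0 < q m) :
    (∀ m, dlFronthaul p w q m ≤ C m) ↔ quantCoeff C * ((powerGain w)ᵀ *ᵥ p) ≤ q := by
  refine forall_congr' fun m => ?_
  have hS : 0 ≤ ∑ i, p i * ‖w i m‖ ^ 2 := sum_nonneg fun i _ => mul_nonneg (hp i) (sq_nonneg _)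
  rw [dlFronthaul, logb_add_div_le_iff one_lt_two (hC m) (hq m) hS]
  simp [mulVec, dotProduct, powerGain, quantCoeff, mul_comm]

lemma smul_noiseGain_le_coupling_mulVec_iff :
    σ2 • noiseGain C w ≤ coupling h C R w *ᵥ p ↔
      beamGain h w *ᵥ p + powerGain w *ᵥ (quantCoeff C * (powerGain h *ᵥ p + σ2 • 1)) + σ2 • 1 ≤
        signalGain h R w * p := by
  have hquant : powerGain w *ᵥ (quantCoeff C * (powerGain h *ᵥ p + σ2 • 1)) =
      powerGain w *ᵥ (quantCoeff C * (powerGain h *ᵥ p)) + σ2 • powerGain w *ᵥ quantCoeff C := by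
    rw [mul_add, mul_smul_comm, mul_one, mulVec_add, mulVec_smul]
  rw [coupling_mulVec, noiseGain, hquant, smul_add, le_sub_iff_add_le]
  apply iff_of_eq
  congr 1
  abel

lemma mem_ulFeasPowers_iff (hσ : 0 < σ2) (hC : ∀ m, 0 < C m) (hR : ∀ k, 0 < R k) {P : ℝ} :
    P ∈ ulFeasPowers h σ2 C R ↔
      ∃ (p : Fin K → ℝ) (w : Fin K → Fin M → ℂ), 0 ≤ p ∧ (∀ k, ∑ m, ‖w k m‖ ^ 2 = 1) ∧
        σ2 • noiseGain C w ≤ coupling h C R w *ᵥ p ∧ P = ∑ k, p k := by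
  constructor
  · rintro ⟨p, w, q, hp, hw, hq, hrate, hfront, hP⟩
    refine ⟨p, w, hp, hw, smul_noiseGain_le_coupling_mulVec_iff.mpr ?_, hP⟩
    have hq_min := (forall_ulFronthaul_le_iff hσ.le hC hp hq).mp hfront
    calc _ ≤ beamGain h w *ᵥ p + powerGain w *ᵥ q + σ2 • 1 := by
          gcongr
          exact mulVec_le_mulVec (powerGain_nonneg w) hq_min
      _ ≤ signalGain h R w * p := (forall_le_ulRate_iff hσ hR hp fun m => (hq m).le).mp hrate
  · rintro ⟨p, w, hp, hw, hA, hP⟩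
    have hq : ∀ m, 0 < (quantCoeff C * (powerGain h *ᵥ p + σ2 • 1)) m := fun m =>
      mul_pos (quantCoeff_pos hC m) <| add_pos_of_nonneg_of_pos
        (mulVec_nonneg (powerGain_nonneg h) hp m) (by simpa using hσ)
    exact ⟨p, w, _, hp, hw, hq,
      (forall_le_ulRate_iff hσ hR hp fun m => (hq m).le).mpr
        (smul_noiseGain_le_coupling_mulVec_iff.mp hA),
      (forall_ulFronthaul_le_iff hσ.le hC hp hq).mpr le_rfl, hP⟩

lemma exists_noiseGain_dotProduct_le_of_mem_dlFeasPowers (hσ : 0 < σ2) (hC : ∀ m, 0 < C m)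
    (hR : ∀ k, 0 < R k) {P : ℝ} (hP : P ∈ dlFeasPowers h σ2 C R) :
    ∃ (p : Fin K → ℝ) (v : Fin K → Fin M → ℂ), 0 ≤ p ∧ (∀ k, ∑ m, ‖v k m‖ ^ 2 = 1) ∧
      σ2 • 1 ≤ (coupling h C R v)ᵀ *ᵥ p ∧ noiseGain C v ⬝ᵥ p ≤ P := by
  obtain ⟨p, v, q, hp, hv, hq, hrate, hfront, rfl⟩ := hP
  have hq_min := (forall_dlFronthaul_le_iff hC hp hq).mp hfront
  refine ⟨p, v, hp, hv, ?_, ?_⟩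
  · rw [coupling_transpose_mulVec, le_sub_iff_add_le']
    calc _ ≤ (beamGain h v)ᵀ *ᵥ p + (powerGain h)ᵀ *ᵥ q + σ2 • 1 := by
          gcongr
          exact mulVec_le_mulVec (fun k m => powerGain_nonneg h m k) hq_min
      _ ≤ signalGain h R v * p := (forall_le_dlRate_iff hσ hR hp fun m => (hq m).le).mp hrate
  · rw [noiseGain_dotProduct]
    gcongr with m
    exact hq_min m

lemma noiseGain_dotProduct_mem_closure_of_lt (hσ : 0 < σ2) (hC : ∀ m, 0 < C m)
    (hR : ∀ k, 0 < R k) (hp : 0 ≤ p) (hw : ∀ k, ∑ m, ‖w k m‖ ^ 2 = 1)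
    (hA : ∀ k, σ2 < ((coupling h C R w)ᵀ *ᵥ p) k) :
    noiseGain C w ⬝ᵥ p ∈ closure (dlFeasPowers h σ2 C R) := by
  set q₀ : Fin M → ℝ := quantCoeff C * ((powerGain w)ᵀ *ᵥ p)
  have hq₀ : 0 ≤ q₀ := mul_nonneg (fun m => (quantCoeff_pos hC m).le) <|
    mulVec_nonneg (fun m k => powerGain_nonneg w k m) hp
  have hcost : Tendsto (fun ε : ℝ => ∑ k, p k + ∑ m, (q₀ + ε • 1) m) (𝓝[>] 0)
      (𝓝 (noiseGain C w ⬝ᵥ p)) := by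
    rw [noiseGain_dotProduct]
    refine (Continuous.tendsto' (by fun_prop) 0 _ (by simp [q₀])).mono_left nhdsWithin_le_nhds
  have hslack : ∀ᶠ ε : ℝ in 𝓝[>] 0, ∀ k,
      ε * ((powerGain h)ᵀ *ᵥ 1) k + σ2 < ((coupling h C R w)ᵀ *ᵥ p) k :=
    eventually_all.mpr fun k => nhdsWithin_le_nhds <|
      (show Continuous fun ε : ℝ => ε * ((powerGain h)ᵀ *ᵥ 1) k + σ2 by fun_prop).continuousAt
        |>.eventually_lt_const (by simpa using hA k)
  refine mem_closure_of_tendsto hcost ?_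
  filter_upwards [hslack, self_mem_nhdsWithin] with ε hε_slack hε
  have hq : ∀ m, 0 < (q₀ + ε • 1) m := fun m =>
    add_pos_of_nonneg_of_pos (hq₀ m) (by simpa using hε)
  refine ⟨p, w, q₀ + ε • 1, hp, hw, hq,
    (forall_le_dlRate_iff hσ hR hp fun m => (hq m).le).mpr fun k => ?_,
    (forall_dlFronthaul_le_iff hC hp hq).mpr fun m => ?_, rfl⟩
  · have hk := hε_slack k
    rw [coupling_transpose_mulVec] at hk
    simp only [mulVec_add, mulVec_smul, Pi.add_apply, Pi.sub_apply, Pi.smul_apply, smul_eq_mul,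
      Pi.one_apply, mul_one] at hk ⊢
    linarith
  · exact le_add_of_nonneg_right (by simpa using le_of_lt hε)

lemma noiseGain_dotProduct_mem_closure (hσ : 0 < σ2) (hC : ∀ m, 0 < C m) (hR : ∀ k, 0 < R k)
    (hp : 0 ≤ p) (hw : ∀ k, ∑ m, ‖w k m‖ ^ 2 = 1) (hA : σ2 • 1 ≤ (coupling h C R w)ᵀ *ᵥ p) :
    noiseGain C w ⬝ᵥ p ∈ closure (dlFeasPowers h σ2 C R) := by
  have hscale : Tendsto (fun t : ℝ => noiseGain C w ⬝ᵥ (t • p)) (𝓝[>] 1)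
      (𝓝 (noiseGain C w ⬝ᵥ p)) :=
    (Continuous.tendsto' (by fun_prop) 1 _ (by rw [one_smul])).mono_left nhdsWithin_le_nhds
  refine isClosed_closure.mem_of_tendsto hscale ?_
  filter_upwards [self_mem_nhdsWithin] with t (ht : 1 < t)
  refine noiseGain_dotProduct_mem_closure_of_lt hσ hC hR (smul_nonneg (by linarith) hp) hw
    fun k => ?_
  have hk : σ2 ≤ ((coupling h C R w)ᵀ *ᵥ p) k := by simpa using hA k
  rw [mulVec_smul, Pi.smul_apply, smul_eq_mul]
  exact hk.trans_lt (lt_mul_of_one_lt_left (hσ.trans_le hk) ht)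

lemma exists_mem_closure_dlFeasPowers_le (hσ : 0 < σ2) (hC : ∀ m, 0 < C m) (hR : ∀ k, 0 < R k)
    {P : ℝ} (hP : P ∈ ulFeasPowers h σ2 C R) :
    ∃ P' ∈ closure (dlFeasPowers h σ2 C R), P' ≤ P := by
  obtain ⟨p, w, hp, hw, hA, rfl⟩ := (mem_ulFeasPowers_iff hσ hC hR).mp hP
  obtain ⟨y, hy, hAy, hcost⟩ := (isZMatrix_coupling h hC R w).exists_transpose_mulVec_eq
    (b := σ2 • noiseGain C w) (c := σ2 • 1) hp (fun k => mul_pos hσ (noiseGain_pos hC w k)) hA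
    (smul_nonneg hσ.le zero_le_one)
  rw [smul_dotProduct, smul_dotProduct, one_dotProduct] at hcost
  exact ⟨_, noiseGain_dotProduct_mem_closure hσ hC hR hy hw hAy.ge,
    le_of_smul_le_smul_left hcost hσ⟩

lemma exists_mem_ulFeasPowers_le (hσ : 0 < σ2) (hC : ∀ m, 0 < C m) (hR : ∀ k, 0 < R k)
    {P : ℝ} (hP : P ∈ dlFeasPowers h σ2 C R) : ∃ P' ∈ ulFeasPowers h σ2 C R, P' ≤ P := by
  obtain ⟨p, v, hp, hv, hA, hpP⟩ := exists_noiseGain_dotProduct_le_of_mem_dlFeasPowers hσ hC hR hP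
  obtain ⟨y, hy, hAy, hcost⟩ :=
    (isZMatrix_coupling h hC R v).transpose.exists_transpose_mulVec_eq
      (b := σ2 • 1) (c := σ2 • noiseGain C v) hp (fun k => by simpa using hσ) hA
      (smul_nonneg hσ.le fun k => (noiseGain_pos hC v k).le)
  rw [transpose_transpose] at hAy
  rw [smul_dotProduct, smul_dotProduct, one_dotProduct] at hcost
  exact ⟨_, (mem_ulFeasPowers_iff hσ hC hR).mpr ⟨y, v, hy, hv, hAy.ge, rfl⟩,
    (le_of_smul_le_smul_left hcost hσ).trans hpP⟩

lemma lowerBounds_ulFeasPowers (hσ : 0 < σ2) (hC : ∀ m, 0 < C m) (hR : ∀ k, 0 < R k) :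
    lowerBounds (ulFeasPowers h σ2 C R) = lowerBounds (dlFeasPowers h σ2 C R) := by
  apply Set.Subset.antisymm
  · intro a ha P hP
    obtain ⟨P', hP', hle⟩ := exists_mem_ulFeasPowers_le hσ hC hR hP
    exact (ha hP').trans hle
  · rw [← lowerBounds_closure]
    intro a ha P hP
    obtain ⟨P', hP', hle⟩ := exists_mem_closure_dlFeasPowers_le hσ hC hR hP
    exact (ha hP').trans hle

end Feasibility

/-- **Equality of optimal sum powers in uplink and downlink power minimization.**
For any channels, noise power `σ² > 0`, fronthaul capacities `C_m > 0` and target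
rates `R_k > 0`, the infimum of the uplink sum power over all feasible uplink
solutions equals the infimum of the downlink sum power over all feasible downlink
solutions; moreover one feasible set is empty iff the other is. -/
theorem power_minimization_duality (M K : ℕ)
    (h : Fin M → Fin K → ℂ) (σ2 : ℝ) (hσ : 0 < σ2)
    (C : Fin M → ℝ) (hC : ∀ m, 0 < C m) (R : Fin K → ℝ) (hR : ∀ k, 0 < R k) :
    sInf (ulFeasPowers h σ2 C R) = sInf (dlFeasPowers h σ2 C R) ∧
    (ulFeasPowers h σ2 C R = ∅ ↔ dlFeasPowers h σ2 C R = ∅) := by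
  have hlb : lowerBounds (ulFeasPowers h σ2 C R) = lowerBounds (dlFeasPowers h σ2 C R) :=
    lowerBounds_ulFeasPowers hσ hC hR
  exact ⟨csInf_eq_csInf_of_lowerBounds_eq hlb,
    by rw [← lowerBounds_eq_univ_iff, hlb, lowerBounds_eq_univ_iff]⟩

end CRAN
end
end
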